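/- arXiv:2012.01880 — 4 statements merged into one kernel-verified Lean document; each statement's English description precedes it below -/
import Mathlib

section
/- In every pure strategy Nash equilibrium x of the BNPG game constructed from the formula φ, we have x_{y_j} = 1 for every j ∈ [m], and x_{a_i} ≠ x_{ā_i} for every i ∈ [n]. -/
/-- The number of neighbors of `v` playing `1` (`true`) in the strategy profile `x`. -/
noncomputable def nOnes {V : Type*} (G : SimpleGraph V) (x : V → Bool) (v : V) : ℕ :=
  Nat.card {w : V // G.Adj v w ∧ x w = true}

/-- `x` is a pure strategy Nash equilibrium (PSNE) of the BNPG game `(G, g, c)`: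
for every player `v`, if `v` plays `1` then `g_v(n_v+1) - g_v(n_v) ≥ c_v`, and if `v` plays `0`
then `g_v(n_v+1) - g_v(n_v) ≤ c_v`. -/
def IsPSNE {V : Type*} (G : SimpleGraph V) (g : V → ℕ → ℝ) (c : V → ℝ) (x : V → Bool) : Prop :=
  ∀ v : V,
    (x v = true → c v ≤ g v (nOnes G x v + 1) - g v (nOnes G x v)) ∧
    (x v = false → g v (nOnes G x v + 1) - g v (nOnes G x v) ≤ c v)
/-- Vertices of the graph built from the formula: `Sum.inl (i, true)` is the literal vertex
`a_i`, `Sum.inl (i, false)` is `ā_i`, and `Sum.inr j` is the clause vertex `y_j`. -/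
abbrev SatV (n m : ℕ) := (Fin n × Bool) ⊕ Fin m

/-- Edges of the graph: `a_i — ā_i` for every variable `i`, and `y_j — f(l)` for every literal
`l` of the clause `C_j`, where `f(x_i) = a_i` and `f(¬x_i) = ā_i`.  (The graph itself is
`SimpleGraph.fromRel` of this relation.) -/
def satRel {n m : ℕ} (clauses : Fin m → Fin 3 → Fin n × Bool) :
    SatV n m → SatV n m → Prop
  | Sum.inl (i, b), Sum.inl (i', b') => i = i' ∧ b ≠ b'
  | Sum.inr j, Sum.inl l => ∃ t : Fin 3, clauses j t = l
  | _, _ => False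

/-- The graph `G` of the reduction. -/
def satGraph {n m : ℕ} (clauses : Fin m → Fin 3 → Fin n × Bool) : SimpleGraph (SatV n m) :=
  SimpleGraph.fromRel (satRel clauses)

/-- `g` for the literal vertices `a_i, ā_i`: values `1000, 1005, 1010, 1015, 1018` at
`0,1,2,3,4` and constant `1018` from `4` on. -/
noncomputable def gLit : ℕ → ℝ
  | 0 => 1000
  | 1 => 1005
  | 2 => 1010
  | 3 => 1015
  | _ => 1018

/-- `g` for the clause vertices `y_j`: values `1000, 1003, 1008, 1013, 1018` at `0,1,2,3,4`
and constant `1018` from `4` on. -/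
noncomputable def gClause : ℕ → ℝ
  | 0 => 1000
  | 1 => 1003
  | 2 => 1008
  | 3 => 1013
  | _ => 1018

/-- The utility functions of the players. -/
noncomputable def satg {n m : ℕ} : SatV n m → ℕ → ℝ
  | Sum.inl _ => gLit
  | Sum.inr _ => gClause

/-!
Every vertex has three neighbors. For a literal vertex the marginal gain from playing `1` exceeds
the cost `4` unless all three neighbors play `1`; so a literal vertex playing `0` forces all its
neighbors to play `1`. A clause vertex with at least one neighbor playing `1` gains `5 > 4` by
playing `1`; so a clause vertex playing `0` forces all its neighbors to play `0`. A clause vertex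
playing `0` would thus have a literal neighbor playing `0`, which in turn forces the clause vertex
to play `1`. Hence all clause vertices play `1`. Now `a_i` and `ā_i` cannot both play `0`, as they
are adjacent, and if both play `1`, then all three neighbors of each play `1`, where the marginal
gain is only `3 < 4`.
-/

section BNPG

variable {V : Type*} {G : SimpleGraph V} {g : V → ℕ → ℝ} {c : V → ℝ} {x : V → Bool} {v : V}

theorem nOnes_eq_ncard : nOnes G x v = {w ∈ G.neighborSet v | x w = true}.ncard := rfl

theorem nOnes_le_ncard_neighborSet [Finite (G.neighborSet v)] :
    nOnes G x v ≤ (G.neighborSet v).ncard :=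
  Set.ncard_le_ncard (Set.sep_subset _ _) (Set.toFinite (G.neighborSet v))

theorem nOnes_eq_ncard_neighborSet (h : ∀ w, G.Adj v w → x w = true) :
    nOnes G x v = (G.neighborSet v).ncard := by
  have hsep : {w ∈ G.neighborSet v | x w = true} = G.neighborSet v :=
    Set.sep_eq_self_iff_mem_true.2 h
  rw [nOnes_eq_ncard, hsep]

theorem eq_true_of_ncard_neighborSet_le_nOnes [Finite (G.neighborSet v)]
    (h : (G.neighborSet v).ncard ≤ nOnes G x v) {w : V} (hw : G.Adj v w) : x w = true :=
  Set.sep_eq_self_iff_mem_true.1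
    (Set.eq_of_subset_of_ncard_le (Set.sep_subset _ _) h (Set.toFinite _)) w hw

theorem eq_false_of_nOnes_eq_zero [Finite (G.neighborSet v)] (h : nOnes G x v = 0) {w : V}
    (hw : G.Adj v w) : x w = false := by
  have hfin : {w ∈ G.neighborSet v | x w = true}.Finite :=
    (Set.toFinite (G.neighborSet v)).subset (Set.sep_subset _ _)
  have hempty := (Set.ncard_eq_zero hfin).1 h
  exact Bool.eq_false_iff.2 (Set.sep_eq_empty_iff_mem_false.1 hempty w hw)

namespace IsPSNE

theorem eq_true_of_adj_of_eq_false [Finite (G.neighborSet v)] (hx : IsPSNE G g c x)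
    (hg : ∀ k < (G.neighborSet v).ncard, c v < g v (k + 1) - g v k) (hv : x v = false)
    {w : V} (hw : G.Adj v w) : x w = true := by
  refine eq_true_of_ncard_neighborSet_le_nOnes ?_ hw
  by_contra! hlt
  exact (hg _ hlt).not_ge ((hx v).2 hv)

theorem eq_false_of_adj_of_eq_false [Finite (G.neighborSet v)] (hx : IsPSNE G g c x)
    (hg : ∀ k, 0 < k → k ≤ (G.neighborSet v).ncard → c v < g v (k + 1) - g v k)
    (hv : x v = false) {w : V} (hw : G.Adj v w) : x w = false := by
  refine eq_false_of_nOnes_eq_zero ?_ hw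
  by_contra hne
  exact (hg _ (Nat.pos_of_ne_zero hne) nOnes_le_ncard_neighborSet).not_ge ((hx v).2 hv)

theorem eq_false_of_forall_adj_eq_true (hx : IsPSNE G g c x)
    (hg : g v ((G.neighborSet v).ncard + 1) - g v (G.neighborSet v).ncard < c v)
    (h : ∀ w, G.Adj v w → x w = true) : x v = false := by
  by_contra hv
  have hgain := (hx v).1 (Bool.eq_true_of_not_eq_false hv)
  rw [nOnes_eq_ncard_neighborSet h] at hgain
  exact hg.not_ge hgain

end IsPSNE

end BNPG

theorem four_lt_gLit_succ_sub {k : ℕ} (hk : k < 3) : 4 < gLit (k + 1) - gLit k := by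
  interval_cases k <;> norm_num [gLit]

theorem gLit_four_sub_gLit_three_lt : gLit 4 - gLit 3 < 4 := by norm_num [gLit]

theorem four_lt_gClause_succ_sub {k : ℕ} (hpos : 0 < k) (hk : k ≤ 3) :
    4 < gClause (k + 1) - gClause k := by
  interval_cases k <;> norm_num [gClause]

/-- The set of indices of the clauses in which the literal `l` occurs. Unlike the set of pairs
`(j, t)` with `clauses j t = l`, it counts a clause repeating `l` only once, as `satGraph` does. -/
def clausesContaining {J T L : Type*} (clauses : J → T → L) (l : L) : Set J :=
  {j | l ∈ Set.range (clauses j)}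

theorem ncard_clausesContaining {J T L : Type*} {clauses : J → T → L}
    (hinj : ∀ j, Function.Injective (clauses j)) (l : L) :
    (clausesContaining clauses l).ncard = Nat.card {p : J × T // clauses p.1 p.2 = l} := by
  have himage : clausesContaining clauses l =
      Prod.fst '' {p : J × T | clauses p.1 p.2 = l} := by
    ext j
    simp [clausesContaining]
  have hinjOn : Set.InjOn Prod.fst {p : J × T | clauses p.1 p.2 = l} := by
    rintro ⟨j, t⟩ ht ⟨_, t'⟩ ht' rfl
    exact congrArg (Prod.mk j) (hinj j (ht.trans ht'.symm))
  rw [himage, hinjOn.ncard_image]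
  rfl

section Reduction

variable {n m : ℕ} {clauses : Fin m → Fin 3 → Fin n × Bool}

theorem satGraph_adj_lit_lit {i i' : Fin n} {b b' : Bool} :
    (satGraph clauses).Adj (Sum.inl (i, b)) (Sum.inl (i', b')) ↔ i' = i ∧ b' = !b := by
  cases b <;> cases b' <;> simp [satGraph, satRel, eq_comm]

theorem satGraph_adj_lit_clause {l : Fin n × Bool} {j : Fin m} :
    (satGraph clauses).Adj (Sum.inl l) (Sum.inr j) ↔ j ∈ clausesContaining clauses l := by
  simp [satGraph, satRel, clausesContaining]

theorem not_satGraph_adj_clause_clause {j j' : Fin m} :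
    ¬ (satGraph clauses).Adj (Sum.inr j) (Sum.inr j') := by
  simp [satGraph, satRel]

theorem satGraph_adj_clause_apply (j : Fin m) (t : Fin 3) :
    (satGraph clauses).Adj (Sum.inr j) (Sum.inl (clauses j t)) :=
  (satGraph_adj_lit_clause.2 ⟨t, rfl⟩).symm

theorem neighborSet_satGraph_lit (i : Fin n) (b : Bool) :
    (satGraph clauses).neighborSet (Sum.inl (i, b)) =
      insert (Sum.inl (i, !b)) (Sum.inr '' clausesContaining clauses (i, b)) := by
  ext (⟨i', b'⟩ | j)
  · simp [satGraph_adj_lit_lit]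
  · simp [satGraph_adj_lit_clause]

theorem neighborSet_satGraph_clause (j : Fin m) :
    (satGraph clauses).neighborSet (Sum.inr j) = Sum.inl '' Set.range (clauses j) := by
  ext (l | j')
  · simp [SimpleGraph.adj_comm, satGraph_adj_lit_clause, clausesContaining]
  · simp [not_satGraph_adj_clause_clause]

theorem ncard_neighborSet_satGraph_lit (l : Fin n × Bool) :
    ((satGraph clauses).neighborSet (Sum.inl l)).ncard =
      (clausesContaining clauses l).ncard + 1 := by
  rw [neighborSet_satGraph_lit, Set.ncard_insert_of_notMem (by simp),
    Set.ncard_image_of_injective _ Sum.inr_injective]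

theorem ncard_neighborSet_satGraph_clause_le (j : Fin m) :
    ((satGraph clauses).neighborSet (Sum.inr j)).ncard ≤ 3 := by
  rw [neighborSet_satGraph_clause, Set.ncard_image_of_injective _ Sum.inl_injective,
    ← Set.image_univ]
  simpa using Set.ncard_image_le (f := clauses j) (Set.toFinite Set.univ)

variable {x : SatV n m → Bool}

theorem eq_true_of_adj_lit_of_eq_false (hx : IsPSNE (satGraph clauses) satg (fun _ => 4) x)
    {l : Fin n × Bool} (hocc : (clausesContaining clauses l).ncard ≤ 2)
    (hl : x (Sum.inl l) = false) {w : SatV n m} (hw : (satGraph clauses).Adj (Sum.inl l) w) :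
    x w = true := by
  have hdeg : ((satGraph clauses).neighborSet (Sum.inl l)).ncard ≤ 3 := by
    rw [ncard_neighborSet_satGraph_lit]
    omega
  exact hx.eq_true_of_adj_of_eq_false
    (fun _ hk => four_lt_gLit_succ_sub (hk.trans_le hdeg)) hl hw

theorem eq_false_of_adj_clause_of_eq_false
    (hx : IsPSNE (satGraph clauses) satg (fun _ => 4) x) {j : Fin m}
    (hj : x (Sum.inr j) = false) {w : SatV n m} (hw : (satGraph clauses).Adj (Sum.inr j) w) :
    x w = false :=
  hx.eq_false_of_adj_of_eq_false (fun _ hpos hk =>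
    four_lt_gClause_succ_sub hpos (hk.trans (ncard_neighborSet_satGraph_clause_le j))) hj hw

theorem lit_eq_false_of_forall_adj_eq_true
    (hx : IsPSNE (satGraph clauses) satg (fun _ => 4) x) {l : Fin n × Bool}
    (hocc : (clausesContaining clauses l).ncard = 2)
    (h : ∀ w, (satGraph clauses).Adj (Sum.inl l) w → x w = true) : x (Sum.inl l) = false := by
  refine hx.eq_false_of_forall_adj_eq_true ?_ h
  rw [ncard_neighborSet_satGraph_lit, hocc]
  exact gLit_four_sub_gLit_three_lt

theorem clause_eq_true (hx : IsPSNE (satGraph clauses) satg (fun _ => 4) x) {j : Fin m}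
    (hocc : ∃ t, (clausesContaining clauses (clauses j t)).ncard ≤ 2) :
    x (Sum.inr j) = true := by
  obtain ⟨t, ht⟩ := hocc
  by_contra hj
  have hadj := satGraph_adj_clause_apply (clauses := clauses) j t
  have hlit := eq_false_of_adj_clause_of_eq_false hx (Bool.eq_false_iff.2 hj) hadj
  exact hj (eq_true_of_adj_lit_of_eq_false hx ht hlit hadj.symm)

theorem lit_eq_true_or_neg_eq_true (hx : IsPSNE (satGraph clauses) satg (fun _ => 4) x)
    {i : Fin n} {b : Bool} (hocc : (clausesContaining clauses (i, b)).ncard ≤ 2) :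
    x (Sum.inl (i, b)) = true ∨ x (Sum.inl (i, !b)) = true := by
  refine or_iff_not_imp_left.2 fun hb => ?_
  exact eq_true_of_adj_lit_of_eq_false hx hocc (Bool.eq_false_iff.2 hb)
    (satGraph_adj_lit_lit.2 ⟨rfl, rfl⟩)

theorem lit_eq_false_or_neg_eq_false (hx : IsPSNE (satGraph clauses) satg (fun _ => 4) x)
    {i : Fin n} {b : Bool} (hocc : (clausesContaining clauses (i, b)).ncard = 2)
    (hclause : ∀ j ∈ clausesContaining clauses (i, b), x (Sum.inr j) = true) :
    x (Sum.inl (i, b)) = false ∨ x (Sum.inl (i, !b)) = false := by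
  refine or_iff_not_imp_right.2 fun hneg => ?_
  refine lit_eq_false_of_forall_adj_eq_true hx hocc ?_
  rintro (⟨i', b'⟩ | j) hw
  · obtain ⟨rfl, rfl⟩ := satGraph_adj_lit_lit.1 hw
    exact Bool.eq_true_of_not_eq_false hneg
  · exact hclause j (satGraph_adj_lit_clause.1 hw)

end Reduction

theorem psne_structure_general {n m : ℕ} {clauses : Fin m → Fin 3 → Fin n × Bool}
    (hle : ∀ j, ∃ t, (clausesContaining clauses (clauses j t)).ncard ≤ 2)
    (htwo : ∀ i, ∃ b, (clausesContaining clauses (i, b)).ncard = 2)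
    {x : SatV n m → Bool} (hx : IsPSNE (satGraph clauses) satg (fun _ => 4) x) :
    (∀ j : Fin m, x (Sum.inr j) = true) ∧
      ∀ i : Fin n, x (Sum.inl (i, true)) ≠ x (Sum.inl (i, false)) := by
  have hclause (j : Fin m) : x (Sum.inr j) = true := clause_eq_true hx (hle j)
  refine ⟨hclause, fun i => ?_⟩
  obtain ⟨b, hb⟩ := htwo i
  have hone := lit_eq_true_or_neg_eq_true hx hb.le
  have hzero := lit_eq_false_or_neg_eq_false hx hb fun j _ => hclause j
  cases b <;> grind

/-- In every pure strategy Nash equilibrium `x` of the BNPG game constructed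
from the formula `φ`, every clause vertex `y_j` plays `1`, and `x_{a_i} ≠ x_{ā_i}` for every
variable `i`. -/
theorem psne_structure (n m : ℕ)
    (clauses : Fin m → Fin 3 → Fin n × Bool)
    (hdistinct : ∀ j : Fin m, Function.Injective fun t : Fin 3 => (clauses j t).1)
    (hocc : ∀ (i : Fin n) (b : Bool),
      Nat.card {p : Fin m × Fin 3 // clauses p.1 p.2 = (i, b)} = 2)
    (x : SatV n m → Bool) (hx : IsPSNE (satGraph clauses) satg (fun _ => 4) x) :
    (∀ j : Fin m, x (Sum.inr j) = true) ∧
      ∀ i : Fin n, x (Sum.inl (i, true)) ≠ x (Sum.inl (i, false)) := by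
  have hocc' (l : Fin n × Bool) : (clausesContaining clauses l).ncard = 2 :=
    (ncard_clausesContaining (fun j => (hdistinct j).of_comp) l).trans (hocc l.1 l.2)
  exact psne_structure_general (fun _ => ⟨0, (hocc' _).le⟩) (fun i => ⟨true, hocc' (i, true)⟩) hx
end

section
/- Every vertex of H has degree at most 9, and the heterogeneous BNPG game on G has a pure strategy Nash equilibrium if and only if the fully homogeneous BNPG game (g, c) on H has a pure strategy Nash equilibrium. -/
/-- Vertices of the graph `H`: `Sum.inl k` is `w_k` (for the player `v_k` of `G`), and
`Sum.inr ⟨k, a⟩` is one of the pendant vertices attached to `w_k`; a player `v_k` of type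
`V_1` (`t k = false`) gets `2` pendants, and one of type `V_2` (`t k = true`) gets
`2 + 4·(2-1) = 6` pendants. -/
abbrev HomV2 (n : ℕ) (t : Fin n → Bool) :=
  Fin n ⊕ (Σ k : Fin n, Fin (if t k then 6 else 2))

/-- Edges of `H`: `{w_i, w_j}` whenever `{v_i, v_j}` is an edge of `G`, and each pendant vertex
of `w_k` is adjacent exactly to `w_k`.  (`H` is `SimpleGraph.fromRel` of this.) -/
def homRel2 {n : ℕ} (t : Fin n → Bool) (G₀ : SimpleGraph (Fin n)) :
    HomV2 n t → HomV2 n t → Prop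
  | Sum.inl i, Sum.inl j => G₀.Adj i j
  | Sum.inl i, Sum.inr p => p.1 = i
  | _, _ => False

/-- The graph `H` of the bounded-degree heterogeneous-to-fully-homogeneous reduction. -/
def homGraph2 {n : ℕ} (t : Fin n → Bool) (G₀ : SimpleGraph (Fin n)) :
    SimpleGraph (HomV2 n t) :=
  SimpleGraph.fromRel (homRel2 t G₀)

/-!
A player whose pendant neighbors all play `1` sees her number of active neighbors shifted by her
number of pendants. A pendant has at most one active neighbor, so `Δg(0) > c` and `Δg(1) > c` force
it to play `1` in every equilibrium. With degrees at most `d`, a player of type `i` (counting from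
`0`) with `2 + (d + 1) i` pendants therefore has between `2 + (d + 1) i` and `2 + (d + 1) i + d`
active neighbors; these ranges are disjoint for distinct types and avoid `{0, 1}`, so a single
utility function can copy the incentives of each type on its own range.
-/

/-- The marginal gain `Δg(k)`. -/
def marginal (g : ℕ → ℝ) (k : ℕ) : ℝ := g (k + 1) - g k

/-- `s` is a best response of a player with utility data `(g, c)` to `m` neighbors playing `1`;
`IsPSNE` asks for this at every player. -/
def IsBestResponse (g : ℕ → ℝ) (c : ℝ) (m : ℕ) (s : Bool) : Prop :=
  (s = true → c ≤ marginal g m) ∧ (s = false → marginal g m ≤ c)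

/-- The graph `G` with pendant vertices attached: `Sum.inr ⟨v, a⟩`, for `a : P v`, is adjacent to
`Sum.inl v` only. -/
def pendantGraph {V : Type*} (G : SimpleGraph V) (P : V → Type*) :
    SimpleGraph (V ⊕ Σ v, P v) where
  Adj
    | .inl v, .inl w => G.Adj v w
    | .inl v, .inr p => p.1 = v
    | .inr p, .inl v => p.1 = v
    | .inr _, .inr _ => False
  symm := ⟨by rintro (v | p) (w | q) h <;> first | exact G.adj_symm h | exact h⟩
  loopless := ⟨by rintro (v | p) h <;> first | exact G.irrefl h | exact h⟩

section BestResponse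

variable {g g' : ℕ → ℝ} {c c' : ℝ} {k m : ℕ} {s : Bool}

theorem isPSNE_iff_isBestResponse {V : Type*} {G : SimpleGraph V} {g : V → ℕ → ℝ} {c : V → ℝ}
    {x : V → Bool} : IsPSNE G g c x ↔ ∀ v, IsBestResponse (g v) (c v) (nOnes G x v) (x v) :=
  Iff.rfl

theorem isBestResponse_iff_eq_true (h : c < marginal g m) : IsBestResponse g c m s ↔ s = true := by
  cases s <;> simp [IsBestResponse, h.le, h]

theorem isBestResponse_congr (hge : c ≤ marginal g k ↔ c' ≤ marginal g' m)
    (hle : marginal g k ≤ c ↔ marginal g' m ≤ c') :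
    IsBestResponse g c k s ↔ IsBestResponse g' c' m s := by
  rw [IsBestResponse, IsBestResponse, hge, hle]

end BestResponse

section NOnes

variable {V : Type*} (G : SimpleGraph V) (v : V)

theorem nOnes_const_true : nOnes G (fun _ => true) v = Nat.card (G.neighborSet v) :=
  Nat.card_congr (Equiv.subtypeEquivRight fun _ => and_iff_left rfl)

theorem nOnes_le_card_neighborSet [Finite (G.neighborSet v)] (x : V → Bool) :
    nOnes G x v ≤ Nat.card (G.neighborSet v) :=
  Nat.card_mono (t := G.neighborSet v) (Set.toFinite _) fun _ hw => hw.1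

end NOnes

section PendantGraph

variable {V : Type*} {G : SimpleGraph V} {P : V → Type*}

theorem neighborSet_pendantGraph_inr (p : Σ v, P v) :
    (pendantGraph G P).neighborSet (.inr p) = {.inl p.1} := by
  ext (v | q)
  · simp [pendantGraph, eq_comm]
  · simp [pendantGraph]

theorem card_neighborSet_pendantGraph_inr (p : Σ v, P v) :
    Nat.card ((pendantGraph G P).neighborSet (.inr p)) = 1 := by
  rw [neighborSet_pendantGraph_inr, Nat.card_unique]

theorem nOnes_pendantGraph_inr_le_one (y : (V ⊕ Σ v, P v) → Bool) (p : Σ v, P v) :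
    nOnes (pendantGraph G P) y (.inr p) ≤ 1 := by
  have : Finite ((pendantGraph G P).neighborSet (.inr p)) := by
    rw [neighborSet_pendantGraph_inr]; infer_instance
  exact (nOnes_le_card_neighborSet _ _ y).trans_eq (card_neighborSet_pendantGraph_inr p)

theorem nOnes_pendantGraph_inl {v : V} [Finite (G.neighborSet v)] [Finite (P v)]
    {y : (V ⊕ Σ v, P v) → Bool} (hy : ∀ p, y (.inr p) = true) :
    nOnes (pendantGraph G P) y (.inl v) = nOnes G (y ∘ .inl) v + Nat.card (P v) := by
  have : Finite {w // G.Adj v w ∧ y (.inl w) = true} :=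
    Set.Finite.subset (Set.toFinite (G.neighborSet v)) fun _ hw => hw.1
  have : Finite {p : Σ v, P v // p.1 = v} := .of_equiv _ (Equiv.sigmaSubtype v).symm
  calc nOnes (pendantGraph G P) y (.inl v)
      = Nat.card ({w // G.Adj v w ∧ y (.inl w) = true} ⊕ {p : Σ v, P v // p.1 = v}) :=
        Nat.card_congr <| Equiv.subtypeSum.trans <|
          .sumCongr (.refl _) (.subtypeEquivRight fun p => and_iff_left (hy p))
    _ = nOnes G (y ∘ .inl) v + Nat.card {p : Σ v, P v // p.1 = v} := Nat.card_sum
    _ = nOnes G (y ∘ .inl) v + Nat.card (P v) := by rw [Nat.card_congr (Equiv.sigmaSubtype v)]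

theorem card_neighborSet_pendantGraph_inl (v : V) [Finite (G.neighborSet v)] [Finite (P v)] :
    Nat.card ((pendantGraph G P).neighborSet (.inl v)) =
      Nat.card (G.neighborSet v) + Nat.card (P v) := by
  rw [← nOnes_const_true, ← nOnes_const_true, nOnes_pendantGraph_inl fun _ => rfl]
  rfl

variable [∀ v, Finite (G.neighborSet v)] [∀ v, Finite (P v)]
  {g : V → ℕ → ℝ} {c : V → ℝ} {g' : (V ⊕ Σ v, P v) → ℕ → ℝ} {c' : (V ⊕ Σ v, P v) → ℝ}

theorem isPSNE_pendantGraph_iff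
    (hinr : ∀ p, ∀ m ≤ 1, c' (.inr p) < marginal (g' (.inr p)) m)
    (hinl : ∀ v, ∀ m ≤ Nat.card (G.neighborSet v), ∀ s,
      IsBestResponse (g' (.inl v)) (c' (.inl v)) (m + Nat.card (P v)) s ↔
        IsBestResponse (g v) (c v) m s)
    {y : (V ⊕ Σ v, P v) → Bool} :
    IsPSNE (pendantGraph G P) g' c' y ↔ (∀ p, y (.inr p) = true) ∧ IsPSNE G g c (y ∘ .inl) := by
  have pendant_iff (p) : IsBestResponse (g' (.inr p)) (c' (.inr p))
      (nOnes (pendantGraph G P) y (.inr p)) (y (.inr p)) ↔ y (.inr p) = true :=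
    isBestResponse_iff_eq_true (hinr p _ (nOnes_pendantGraph_inr_le_one y p))
  simp only [isPSNE_iff_isBestResponse, Sum.forall, pendant_iff]
  rw [and_comm]
  refine and_congr_right fun hy => forall_congr' fun v => ?_
  rw [nOnes_pendantGraph_inl hy, hinl v _ (nOnes_le_card_neighborSet G v _), Function.comp_apply]

theorem exists_isPSNE_pendantGraph_iff
    (hinr : ∀ p, ∀ m ≤ 1, c' (.inr p) < marginal (g' (.inr p)) m)
    (hinl : ∀ v, ∀ m ≤ Nat.card (G.neighborSet v), ∀ s,
      IsBestResponse (g' (.inl v)) (c' (.inl v)) (m + Nat.card (P v)) s ↔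
        IsBestResponse (g v) (c v) m s) :
    (∃ y, IsPSNE (pendantGraph G P) g' c' y) ↔ ∃ x, IsPSNE G g c x := by
  simp only [isPSNE_pendantGraph_iff hinr hinl]
  constructor
  · rintro ⟨y, -, hy⟩
    exact ⟨_, hy⟩
  · rintro ⟨x, hx⟩
    exact ⟨Sum.elim x fun _ => true, fun _ => rfl, hx⟩

end PendantGraph

theorem homGraph2_eq_pendantGraph {n : ℕ} (t : Fin n → Bool) (G₀ : SimpleGraph (Fin n)) :
    homGraph2 t G₀ = pendantGraph G₀ fun k => Fin (if t k then 6 else 2) := by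
  ext (i | p) (j | q)
  · simpa [homGraph2, homRel2, pendantGraph, G₀.adj_comm j i] using G₀.ne_of_adj
  all_goals simp [homGraph2, homRel2, pendantGraph]

-- The paper's `f(k) - 1` and `h(k)` are the quotient and the remainder of `k - 2` by `d + 1`: types
-- are numbered from `0` here, and `r` of them fill the range `2 ≤ k ≤ 1 + (d + 1) r`.
theorem hetero_iff_homo_deg9_general {V : Type*} (G : SimpleGraph V)
    [∀ v, Finite (G.neighborSet v)] {d r : ℕ} (hdeg : ∀ v, Nat.card (G.neighborSet v) ≤ d)
    (t : V → ℕ) (ht : ∀ v, t v < r) (P : V → Type*) [∀ v, Finite (P v)]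
    (hP : ∀ v, Nat.card (P v) = 2 + (d + 1) * t v)
    (gV : V → ℕ → ℝ) (cV : V → ℝ) (g : ℕ → ℝ) (c : ℝ)
    (h0 : c < marginal g 0) (h1 : c < marginal g 1)
    (hg : ∀ k v, 2 ≤ k → k ≤ 1 + (d + 1) * r → (k - 2) / (d + 1) = t v →
      (c ≤ marginal g k ↔ cV v ≤ marginal (gV v) (k - 2 - (d + 1) * ((k - 2) / (d + 1)))) ∧
      (marginal g k ≤ c ↔ marginal (gV v) (k - 2 - (d + 1) * ((k - 2) / (d + 1))) ≤ cV v)) :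
    (∀ w, Nat.card ((pendantGraph G P).neighborSet w) ≤ 1 + (d + 1) * r) ∧
      ((∃ x, IsPSNE G gV cV x) ↔
        ∃ y, IsPSNE (pendantGraph G P) (fun _ => g) (fun _ => c) y) := by
  have add_card_le {m : ℕ} (v : V) (hm : m ≤ d) : m + Nat.card (P v) ≤ 1 + (d + 1) * r := by
    have : (d + 1) * (t v + 1) ≤ (d + 1) * r := Nat.mul_le_mul_left _ (ht v)
    rw [hP]; lia
  refine ⟨?_, (exists_isPSNE_pendantGraph_iff ?_ ?_).symm⟩
  · rintro (v | p)
    · exact (card_neighborSet_pendantGraph_inl v).trans_le (add_card_le v (hdeg v))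
    · exact (card_neighborSet_pendantGraph_inr p).trans_le (Nat.le_add_right _ _)
  · intro _ m hm
    interval_cases m <;> assumption
  · intro v m hm s
    have hmd : m ≤ d := hm.trans (hdeg v)
    have sub_two : m + Nat.card (P v) - 2 = m + (d + 1) * t v := by rw [hP]; lia
    have div_eq : (m + (d + 1) * t v) / (d + 1) = t v := by
      rw [Nat.add_mul_div_left _ _ d.succ_pos, Nat.div_eq_of_lt (Nat.lt_succ_of_le hmd), zero_add]
    have hk := hg (m + Nat.card (P v)) v (by rw [hP]; lia) (add_card_le v hmd)
      (by rw [sub_two, div_eq])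
    rw [sub_two, div_eq, Nat.add_sub_cancel] at hk
    exact isBestResponse_congr hk.1 hk.2

/-- Let `(G₀, (g_v), (c_v))` be a BNPG game of maximum degree at most `3` with
two utility types: player `v` of type `t v ∈ {false, true}` (i.e. `v ∈ V_1` or `v ∈ V_2`) has
utility data `(gt (t v), ct (t v))`.  Let `(g, c)` be any fully homogeneous BNPG game on the
graph `H` built from `G₀` satisfying `Δg(0) > c`, `Δg(1) > c`, and for every `2 ≤ k ≤ 9`
(writing `f(k) - 1 = (k-2)/4`, identified with the type `b`, and `h(k) = k - 2 - 4·((k-2)/4)`):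
`Δg(k) ≥ c ↔ Δg_{f(k)}(h(k)) ≥ c_{f(k)}` and `Δg(k) ≤ c ↔ Δg_{f(k)}(h(k)) ≤ c_{f(k)}`.
Then every vertex of `H` has degree at most `9`, and the heterogeneous game on `G₀` has a PSNE
iff the fully homogeneous game `(g, c)` on `H` has a PSNE. -/
theorem hetero_iff_homo_deg9 (n : ℕ) (G₀ : SimpleGraph (Fin n))
    (hdeg : ∀ v : Fin n, Nat.card (G₀.neighborSet v) ≤ 3)
    (t : Fin n → Bool) (gt : Bool → ℕ → ℝ) (ct : Bool → ℝ)
    (hMonoG : ∀ b, Monotone (gt b)) (hcG : ∀ b, 0 < ct b)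
    (g : ℕ → ℝ) (c : ℝ) (hMono : Monotone g) (hc : 0 < c)
    (h0 : c < g 1 - g 0) (h1 : c < g 2 - g 1)
    (hg : ∀ (k : ℕ) (b : Bool), 2 ≤ k → k ≤ 9 → (k - 2) / 4 = (if b then 1 else 0) →
      ((c ≤ g (k + 1) - g k ↔
          ct b ≤ gt b (k - 2 - 4 * ((k - 2) / 4) + 1) - gt b (k - 2 - 4 * ((k - 2) / 4))) ∧
       (g (k + 1) - g k ≤ c ↔
          gt b (k - 2 - 4 * ((k - 2) / 4) + 1) - gt b (k - 2 - 4 * ((k - 2) / 4)) ≤ ct b))) :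
    (∀ w : HomV2 n t, Nat.card ((homGraph2 t G₀).neighborSet w) ≤ 9) ∧
      ((∃ x : Fin n → Bool, IsPSNE G₀ (fun v => gt (t v)) (fun v => ct (t v)) x) ↔
        ∃ y : HomV2 n t → Bool, IsPSNE (homGraph2 t G₀) (fun _ => g) (fun _ => c) y) := by
  rw [homGraph2_eq_pendantGraph]
  exact hetero_iff_homo_deg9_general (r := 2) G₀ hdeg (fun v => if t v then 1 else 0)
    (fun v => by split <;> simp) _ (fun v => by cases h : t v <;> simp) _ _ g c h0 h1
    fun k v => hg k (t v)
end

section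
/- Let (G = (V, E), (g_v), (c_v)) be a BNPG game and let T ⊆ V be a set of vertices each of which is adjacent in G to every other vertex of G. Let y : V ∖ T → {0,1}, let p = |{u ∈ V ∖ T : y_u = 1}|, and define g′_v(k) = g_v(k + p) for v ∈ T. Suppose x, x′ : T → {0,1} have the same number of players playing 1, the combined profile (y, x) is a PSNE of the game on G, and x′ is a PSNE of the game on the induced subgraph G[T] (which is a complete graph) with functions (g′_v)_{v ∈ T} and constants (c_v)_{v ∈ T}. Then the combined profile (y, x′) is also a PSNE of the game on G. -/
/-!
Every player of `T` sees all players outside `T`, so in the whole graph she has exactly `p` more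
neighbors playing `1` than in `G[T]`; her equilibrium condition under `z'` is therefore the one in
the shifted game on `G[T]`.  A player outside `T` sees all of `T`, so only the number of players
of `T` playing `1` matters to her, and it is the same under `z` and `z'`.
-/

section

variable {V : Type*} {G : SimpleGraph V} {x x' : V → Bool} {T : Set V}

theorem nOnes_eq_ncard_s12 (G : SimpleGraph V) (x : V → Bool) (v : V) :
    nOnes G x v = (G.neighborSet v ∩ x ⁻¹' {true}).ncard :=
  Nat.card_coe_set_eq (G.neighborSet v ∩ x ⁻¹' {true})

theorem nOnes_eq_ncard_add_ncard_compl (G : SimpleGraph V) (v : V) (T : Set V)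
    (hx : (x ⁻¹' {true}).Finite) :
    nOnes G x v = (T ∩ G.neighborSet v ∩ x ⁻¹' {true}).ncard +
      (Tᶜ ∩ G.neighborSet v ∩ x ⁻¹' {true}).ncard := by
  rw [nOnes_eq_ncard_s12, Set.inter_assoc, Set.inter_assoc, Set.inter_comm T, Set.inter_comm Tᶜ,
    ← Set.sdiff_eq, Set.ncard_inter_add_ncard_sdiff_eq_ncard _ _ (hx.subset Set.inter_subset_right)]

theorem nOnes_induce (G : SimpleGraph V) (x : V → Bool) (v : T) :
    nOnes (G.induce T) (fun w => x w) v = (T ∩ G.neighborSet v ∩ x ⁻¹' {true}).ncard := by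
  rw [nOnes_eq_ncard_s12, ← Set.ncard_image_of_injective _ Subtype.val_injective, Set.inter_assoc]
  exact congrArg Set.ncard (Subtype.image_preimage_coe T (G.neighborSet v ∩ x ⁻¹' {true}))

theorem nOnes_eq_nOnes_induce_add (v : T) (hv : Tᶜ ⊆ G.neighborSet v)
    (hx : (x ⁻¹' {true}).Finite) :
    nOnes G x v = nOnes (G.induce T) (fun w => x w) v + (Tᶜ ∩ x ⁻¹' {true}).ncard := by
  rw [nOnes_eq_ncard_add_ncard_compl G v T hx, nOnes_induce, Set.inter_eq_left.mpr hv]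

theorem nOnes_congr_of_subset_neighborSet {v : V} (hv : T ⊆ G.neighborSet v)
    (hx : (x ⁻¹' {true}).Finite) (hx' : (x' ⁻¹' {true}).Finite) (hagree : Set.EqOn x x' Tᶜ)
    (hcount : (T ∩ x ⁻¹' {true}).ncard = (T ∩ x' ⁻¹' {true}).ncard) :
    nOnes G x v = nOnes G x' v := by
  have houtside : Tᶜ ∩ G.neighborSet v ∩ x ⁻¹' {true} = Tᶜ ∩ G.neighborSet v ∩ x' ⁻¹' {true} :=
    (hagree.mono Set.inter_subset_left).inter_preimage_eq {true}
  rw [nOnes_eq_ncard_add_ncard_compl G v T hx, nOnes_eq_ncard_add_ncard_compl G v T hx',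
    Set.inter_eq_left.mpr hv, hcount, houtside]

end

theorem psne_swap_on_clique_general {V : Type*} {G : SimpleGraph V} {g : V → ℕ → ℝ} {c : V → ℝ}
    {T : Set V} (hT : G.IsCompleteBetween T Tᶜ) {z z' : V → Bool}
    (hfin : (z ⁻¹' {true}).Finite) (hfin' : (z' ⁻¹' {true}).Finite) (hagree : Set.EqOn z z' Tᶜ)
    {p : ℕ} (hp : p = (Tᶜ ∩ z ⁻¹' {true}).ncard)
    (hcount : (T ∩ z ⁻¹' {true}).ncard = (T ∩ z' ⁻¹' {true}).ncard)
    (hz : IsPSNE G g c z)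
    (hz' : IsPSNE (G.induce T) (fun v k => g v (k + p)) (fun v => c v) (fun v => z' v)) :
    IsPSNE G g c z' := by
  intro v
  by_cases hv : v ∈ T
  · have hshift : nOnes G z' v = nOnes (G.induce T) (fun w => z' w) ⟨v, hv⟩ + p := by
      rw [hp, hagree.inter_preimage_eq]
      exact nOnes_eq_nOnes_induce_add ⟨v, hv⟩ (fun _ hw => hT hv hw) hfin'
    rw [hshift, Nat.add_right_comm]
    exact hz' ⟨v, hv⟩
  · have hsame : nOnes G z v = nOnes G z' v :=
      nOnes_congr_of_subset_neighborSet (fun _ hw => (hT hw hv).symm) hfin hfin' hagree hcount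
    rw [← hsame, ← hagree hv]
    exact hz v

/-- Let `(G, g, c)` be a BNPG game and `T ⊆ V` a set of vertices each of
which is adjacent to every other vertex of `G`.  Let `z` and `z'` be strategy profiles agreeing
outside `T` (the common outside part is the profile `y`), let `p` be the number of players
outside `T` playing `1`, and set `g′_v(k) = g_v(k + p)` for `v ∈ T`.  If `z` and `z'` have the
same number of players of `T` playing `1`, `z` is a PSNE of the game on `G`, and the
restriction of `z'` to `T` is a PSNE of the game on the induced (complete) subgraph `G[T]` with
functions `g′` and constants `c`, then `z'` is also a PSNE of the game on `G`. -/
theorem psne_swap_on_clique {V : Type*} [Fintype V] (G : SimpleGraph V)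
    (g : V → ℕ → ℝ) (c : V → ℝ)
    (hMono : ∀ v, Monotone (g v)) (hc : ∀ v, 0 < c v)
    (T : Set V) (hT : ∀ v ∈ T, ∀ w : V, w ≠ v → G.Adj v w)
    (z z' : V → Bool) (hagree : ∀ v ∉ T, z v = z' v)
    (p : ℕ) (hp : p = Nat.card {v : V // v ∉ T ∧ z v = true})
    (hcount : Nat.card {v : V // v ∈ T ∧ z v = true} =
      Nat.card {v : V // v ∈ T ∧ z' v = true})
    (hz : IsPSNE G g c z)
    (hz' : IsPSNE (G.induce T) (fun v k => g v.1 (k + p)) (fun v => c v.1)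
      (fun v => z' v.1)) :
    IsPSNE G g c z' :=
  psne_swap_on_clique_general (fun v hv w hw => hT v hv w (ne_of_mem_of_not_mem hv hw).symm)
    (Set.toFinite _) (Set.toFinite _) hagree hp hcount hz hz'
end

section
/- Every fully homogeneous BNPG game on a cycle C_n (vertices v_1,…,v_n with edges {v_i, v_{i+1}} for 1 ≤ i ≤ n−1 and the edge {v_n, v_1}, n ≥ 3) has a pure strategy Nash equilibrium. -/
/-!
On a 2-regular graph only the marginal benefits `Δ k = g (k + 1) - g k` with `k ≤ 2` matter. If
`Δ 0 ≤ c`, nobody plays; if `c ≤ Δ 2`, everybody plays. Otherwise `Δ 2 < c < Δ 0`, and a maximal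
independent set `s` decides the game, because a vertex of `s` has no neighbor in `s` and any other
vertex has at least one: if `Δ 1 ≤ c`, exactly the vertices of `s` play, and if `c ≤ Δ 1`, exactly
the vertices outside `s` play.
-/

section IndependentSets

variable {V : Type*} {G : SimpleGraph V} {s : Set V} {v : V}

theorem exists_maximal_isIndepSet (G : SimpleGraph V) : ∃ s, Maximal G.IsIndepSet s :=
  zorn_subset {s | G.IsIndepSet s} fun C hC hchain =>
    ⟨⋃₀ C, hchain.pairwise_sUnion.mpr fun _ ht => hC ht, fun _ => Set.subset_sUnion_of_mem⟩

theorem exists_mem_adj_of_maximal_isIndepSet (hs : Maximal G.IsIndepSet s) (hv : v ∉ s) :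
    ∃ w ∈ s, G.Adj v w := by
  by_contra! hnonadj
  have hinsert : G.IsIndepSet (insert v s) :=
    hs.prop.insert fun w hw _ => ⟨hnonadj w hw, fun hwv => hnonadj w hw hwv.symm⟩
  exact hv (hs.le_of_ge hinsert (Set.subset_insert v s) (Set.mem_insert v s))

end IndependentSets

section CountingOnes

variable {V : Type*} {G : SimpleGraph V} [G.LocallyFinite] {x : V → Bool} {v : V}

theorem nOnes_eq_card_filter :
    nOnes G x v = ((G.neighborFinset v).filter (x · = true)).card := by
  rw [nOnes, ← Nat.card_eq_finsetCard]
  exact Nat.card_congr (Equiv.subtypeEquivRight fun w => by simp)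

theorem nOnes_le_degree : nOnes G x v ≤ G.degree v := by
  rw [nOnes_eq_card_filter]
  exact Finset.card_filter_le _ _

theorem nOnes_eq_zero_iff : nOnes G x v = 0 ↔ ∀ w, G.Adj v w → x w = false := by
  simp [nOnes_eq_card_filter]

theorem nOnes_eq_degree_iff : nOnes G x v = G.degree v ↔ ∀ w, G.Adj v w → x w = true := by
  rw [nOnes_eq_card_filter, ← G.card_neighborFinset_eq_degree, Finset.card_filter_eq_iff]
  simp only [SimpleGraph.mem_neighborFinset]

end CountingOnes

section Equilibria

variable {V : Type*} {G : SimpleGraph V} {g : V → ℕ → ℝ} {c : V → ℝ}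

theorem isPSNE_const_false (h : ∀ v, g v 1 - g v 0 ≤ c v) : IsPSNE G g c fun _ => false :=
  fun v => by simpa [nOnes] using h v

variable [G.LocallyFinite]

theorem isPSNE_const_true (h : ∀ v, c v ≤ g v (G.degree v + 1) - g v (G.degree v)) :
    IsPSNE G g c fun _ => true := fun v => by
  have hdeg : nOnes G (fun _ => true) v = G.degree v := nOnes_eq_degree_iff.mpr fun _ _ => rfl
  simpa [hdeg] using h v

variable {s : Set V} [DecidablePred (· ∈ s)]

theorem isPSNE_decide_mem (hs : Maximal G.IsIndepSet s)
    (hmem : ∀ v ∈ s, c v ≤ g v 1 - g v 0)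
    (hnotMem : ∀ v ∉ s, ∀ k, 0 < k → k ≤ G.degree v → g v (k + 1) - g v k ≤ c v) :
    IsPSNE G g c fun v => decide (v ∈ s) := by
  refine fun v => ⟨fun hv => ?_, fun hv => ?_⟩
  · replace hv := of_decide_eq_true hv
    have hzero : nOnes G (fun w => decide (w ∈ s)) v = 0 :=
      nOnes_eq_zero_iff.mpr fun w hvw => decide_eq_false fun hw => hs.prop hv hw hvw.ne hvw
    rw [hzero]
    exact hmem v hv
  · replace hv := of_decide_eq_false hv
    obtain ⟨w, hw, hvw⟩ := exists_mem_adj_of_maximal_isIndepSet hs hv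
    have hne : nOnes G (fun w => decide (w ∈ s)) v ≠ 0 := fun hzero =>
      of_decide_eq_false (nOnes_eq_zero_iff.mp hzero w hvw) hw
    exact hnotMem v hv _ (Nat.pos_of_ne_zero hne) nOnes_le_degree

theorem isPSNE_decide_notMem (hs : Maximal G.IsIndepSet s)
    (hmem : ∀ v ∈ s, g v (G.degree v + 1) - g v (G.degree v) ≤ c v)
    (hnotMem : ∀ v ∉ s, ∀ k < G.degree v, c v ≤ g v (k + 1) - g v k) :
    IsPSNE G g c fun v => decide (v ∉ s) := by
  refine fun v => ⟨fun hv => ?_, fun hv => ?_⟩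
  · replace hv := of_decide_eq_true hv
    obtain ⟨w, hw, hvw⟩ := exists_mem_adj_of_maximal_isIndepSet hs hv
    have hne : nOnes G (fun w => decide (w ∉ s)) v ≠ G.degree v := fun hdeg =>
      of_decide_eq_true (nOnes_eq_degree_iff.mp hdeg w hvw) hw
    exact hnotMem v hv _ (nOnes_le_degree.lt_of_ne hne)
  · replace hv := not_not.mp (of_decide_eq_false hv)
    have hdeg : nOnes G (fun w => decide (w ∉ s)) v = G.degree v :=
      nOnes_eq_degree_iff.mpr fun w hvw => decide_eq_true fun hw => hs.prop hv hw hvw.ne hvw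
    rw [hdeg]
    exact hmem v hv

end Equilibria

theorem cycle_psne_general {V : Type*} (G : SimpleGraph V) [G.LocallyFinite]
    (hG : G.IsRegularOfDegree 2) (g : ℕ → ℝ) (c : ℝ) :
    ∃ x : V → Bool, IsPSNE G (fun _ => g) (fun _ => c) x := by
  classical
  obtain h0 | h0 := le_total (g 1 - g 0) c
  · exact ⟨_, isPSNE_const_false fun _ => h0⟩
  obtain h2 | h2 := le_total c (g 3 - g 2)
  · exact ⟨_, isPSNE_const_true fun v => by rwa [hG v]⟩
  obtain ⟨s, hs⟩ := exists_maximal_isIndepSet G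
  obtain h1 | h1 := le_total (g 2 - g 1) c
  · refine ⟨_, isPSNE_decide_mem hs (fun _ _ => h0) fun v _ k hpos hk => ?_⟩
    rw [hG v] at hk
    interval_cases k
    exacts [h1, h2]
  · refine ⟨_, isPSNE_decide_notMem hs (fun v _ => by rwa [hG v]) fun v _ k hk => ?_⟩
    rw [hG v] at hk
    interval_cases k
    exacts [h0, h1]

theorem cycleGraph_isRegularOfDegree_two {n : ℕ} (hn : 3 ≤ n) :
    (SimpleGraph.cycleGraph n).IsRegularOfDegree 2 := by
  obtain ⟨m, rfl⟩ := Nat.exists_eq_add_of_le' hn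
  exact fun _ => SimpleGraph.cycleGraph_degree_three_le

/-- Every fully homogeneous BNPG game on a cycle with `n ≥ 3` vertices has a
pure strategy Nash equilibrium. -/
theorem cycle_psne (n : ℕ) (hn : 3 ≤ n) (g : ℕ → ℝ) (c : ℝ)
    (hMono : Monotone g) (hc : 0 < c) :
    ∃ x : Fin n → Bool, IsPSNE (SimpleGraph.cycleGraph n) (fun _ => g) (fun _ => c) x :=
  cycle_psne_general _ (cycleGraph_isRegularOfDegree_two hn) g c
end
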